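/- For all integers m ≥ 0 and l ∈ ℤ, one has S̃_{m+1,l}(q) = q^{−m−l} S̃_{m,l+1}(q) + q^{−l} S_{m,l}(q) + S_{m,l−1}(q), an identity in ℤ[q, q⁻¹]. -/

import Mathlib

/-!
Both sums belong to a family indexed by an integer `a`, with exponent
`(ν+l−m)(ν+l−a) + ν(ν−m)`: `a = 0` gives `S` and `a = 1` gives `S̃`. The recurrence holds for every
`a`, summand by summand. Apply the `q`-Pascal rule `C(n+1,k) = C(n,k-1) + q^k C(n,k)` to
`C(m+1,ν)`: the part with `q^ν C(m,ν)` is a summand for `(a-1, m, l-1)`. In the part with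
`C(m,ν-1)`, put `ν = μ + 1` and apply the rule again to `C(μ+1,m-l-μ)`: up to powers of `q`
independent of `μ`, this gives the summands of index `μ` for `(a, m, l+1)` and for `(a-1, m, l)`.
-/

open LaurentPolynomial

/-- The Gaussian (q-)binomial coefficient `C(n,k)_q` as a Laurent polynomial in `q`,
defined by the q-Pascal recursion `C(n+1,k+1)_q = C(n,k)_q + q^(k+1) C(n,k+1)_q`. -/
noncomputable def qbinom : ℕ → ℕ → LaurentPolynomial ℤ
  | _, 0 => 1
  | 0, _ + 1 => 0
  | n + 1, k + 1 => qbinom n k + T ((k : ℤ) + 1) * qbinom n (k + 1)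

/-- `C(n,k)_q` for integer arguments, zero unless `0 ≤ k ≤ n`. -/
noncomputable def qbinomZ (n k : ℤ) : LaurentPolynomial ℤ :=
  if 0 ≤ k ∧ k ≤ n then qbinom n.toNat k.toNat else 0

/-- `S_{m,l}(q) = Σ_{ν∈ℤ} q^{(ν+l−m)(ν+l)+ν(ν−m)} C(m,ν)_q C(ν, m−l−ν)_q`. -/
noncomputable def Sq (m : ℕ) (l : ℤ) : LaurentPolynomial ℤ :=
  ∑ᶠ ν : ℤ,
    T ((ν + l - m) * (ν + l) + ν * (ν - m)) * (qbinomZ m ν * qbinomZ ν (m - l - ν))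

/-- `S̃_{m,l}(q) = Σ_{ν∈ℤ} q^{(ν+l−m)(ν+l−1)+ν(ν−m)} C(m,ν)_q C(ν, m−l−ν)_q`. -/
noncomputable def Sqt (m : ℕ) (l : ℤ) : LaurentPolynomial ℤ :=
  ∑ᶠ ν : ℤ,
    T ((ν + l - m) * (ν + l - 1) + ν * (ν - m)) * (qbinomZ m ν * qbinomZ ν (m - l - ν))

lemma qbinom_zero_right (n : ℕ) : qbinom n 0 = 1 := by
  cases n <;> rfl

lemma qbinom_eq_zero_of_lt {n k : ℕ} (h : n < k) : qbinom n k = 0 := by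
  induction n generalizing k with
  | zero =>
    obtain ⟨j, rfl⟩ := Nat.exists_eq_add_one.mpr h
    rfl
  | succ n ih =>
    obtain ⟨j, rfl⟩ := Nat.exists_eq_add_one.mpr (Nat.zero_lt_of_lt h)
    rw [qbinom, ih (by lia), ih (by lia), mul_zero, add_zero]

lemma qbinomZ_natCast (n k : ℕ) : qbinomZ n k = qbinom n k := by
  unfold qbinomZ
  split_ifs with h
  · simp only [Int.toNat_natCast]
  · rw [qbinom_eq_zero_of_lt (by lia)]

lemma qbinomZ_of_neg {n k : ℤ} (hk : k < 0) : qbinomZ n k = 0 :=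
  if_neg (by lia)

lemma qbinomZ_add_one_left {n : ℤ} (hn : 0 ≤ n) (k : ℤ) :
    qbinomZ (n + 1) k = qbinomZ n (k - 1) + T k * qbinomZ n k := by
  rcases lt_or_ge k 0 with hk | hk
  · simp [qbinomZ_of_neg hk, qbinomZ_of_neg (show k - 1 < 0 by lia)]
  lift n to ℕ using hn
  lift k to ℕ using hk
  rw [← Nat.cast_add_one, qbinomZ_natCast, qbinomZ_natCast]
  cases k with
  | zero => simp [qbinom_zero_right, qbinomZ_of_neg]
  | succ j => rw [Nat.cast_add_one, add_sub_cancel_right, qbinomZ_natCast, qbinom]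

/- The factor `C(n,k)` vanishes for `k < 0`, where the Pascal rule for `C(k+1,j)` can break down:
it would give `C(0,0) = C(-1,-1) + C(-1,0) = 0`. -/
lemma qbinomZ_mul_qbinomZ_add_one_left (n k j : ℤ) :
    qbinomZ n k * qbinomZ (k + 1) j =
      qbinomZ n k * (qbinomZ k (j - 1) + T j * qbinomZ k j) := by
  rcases lt_or_ge k 0 with hk | hk
  · rw [qbinomZ_of_neg hk, zero_mul, zero_mul]
  · rw [qbinomZ_add_one_left hk]

lemma hasFiniteSupport_qbinomZ (n : ℤ) : (qbinomZ n).HasFiniteSupport :=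
  (Set.finite_Icc 0 n).subset fun _ hk => by_contra fun h => hk (if_neg h)

/-- The `ν`-th summand of `qTrinomial a m l`. -/
noncomputable def qTrinomialTerm (a : ℤ) (m : ℕ) (l ν : ℤ) : LaurentPolynomial ℤ :=
  T ((ν + l - m) * (ν + l - a) + ν * (ν - m)) * (qbinomZ m ν * qbinomZ ν (m - l - ν))

/-- A `q`-analogue of the trinomial coefficient `[x^(m-l)] (1 + x + x²)^m`, interpolating between
`S_{m,l}` (at `a = 0`) and `S̃_{m,l}` (at `a = 1`) so that the recurrence in `m` can shift `a`. -/
noncomputable def qTrinomial (a : ℤ) (m : ℕ) (l : ℤ) : LaurentPolynomial ℤ :=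
  ∑ᶠ ν : ℤ, qTrinomialTerm a m l ν

lemma Sq_eq_qTrinomial (m : ℕ) (l : ℤ) : Sq m l = qTrinomial 0 m l := by
  simp only [Sq, qTrinomial, qTrinomialTerm, sub_zero]

lemma Sqt_eq_qTrinomial (m : ℕ) (l : ℤ) : Sqt m l = qTrinomial 1 m l := rfl

lemma hasFiniteSupport_qTrinomialTerm (a : ℤ) (m : ℕ) (l : ℤ) :
    (qTrinomialTerm a m l).HasFiniteSupport :=
  .mul_right _ (.mul_left (hasFiniteSupport_qbinomZ m) _)

lemma qTrinomialTerm_succ_left (a : ℤ) (m : ℕ) (l μ : ℤ) :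
    qTrinomialTerm a (m + 1) l (μ + 1) =
      T ((μ + l - m) * (μ + 1 + l - a) + (μ + 1) * (μ - m)) *
          (qbinomZ m μ * qbinomZ (μ + 1) (m - l - μ)) +
        qTrinomialTerm (a - 1) m (l - 1) (μ + 1) := by
  have exponent_left :
      (μ + 1 + l - (m + 1)) * (μ + 1 + l - a) + (μ + 1) * (μ + 1 - (m + 1)) =
        (μ + l - m) * (μ + 1 + l - a) + (μ + 1) * (μ - m) := by ring
  have exponent_right :
      (μ + 1 + (l - 1) - m) * (μ + 1 + (l - 1) - (a - 1)) + (μ + 1) * (μ + 1 - m) =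
        (μ + l - m) * (μ + 1 + l - a) + (μ + 1) * (μ - m) + (μ + 1) := by ring
  have lower_left : (m : ℤ) + 1 - l - (μ + 1) = m - l - μ := by ring
  have lower_right : (m : ℤ) - (l - 1) - (μ + 1) = m - l - μ := by ring
  simp only [qTrinomialTerm, Nat.cast_add_one]
  rw [exponent_left, exponent_right, lower_left, lower_right,
    qbinomZ_add_one_left m.cast_nonneg, add_sub_cancel_right, T_add _ (μ + 1)]
  ring

lemma T_mul_qbinomZ_mul_eq_add_qTrinomialTerm (a : ℤ) (m : ℕ) (l μ : ℤ) :
    T ((μ + l - m) * (μ + 1 + l - a) + (μ + 1) * (μ - m)) *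
        (qbinomZ m μ * qbinomZ (μ + 1) (m - l - μ)) =
      T (a - 1 - m - l) * qTrinomialTerm a m (l + 1) μ +
        T (-l) * qTrinomialTerm (a - 1) m l μ := by
  have exponent_left :
      a - 1 - m - l + ((μ + (l + 1) - m) * (μ + (l + 1) - a) + μ * (μ - m)) =
        (μ + l - m) * (μ + 1 + l - a) + (μ + 1) * (μ - m) := by ring
  have exponent_right :
      -l + ((μ + l - m) * (μ + l - (a - 1)) + μ * (μ - m)) =
        (μ + l - m) * (μ + 1 + l - a) + (μ + 1) * (μ - m) + (m - l - μ) := by ring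
  have lower_left : (m : ℤ) - (l + 1) - μ = m - l - μ - 1 := by ring
  simp only [qTrinomialTerm]
  rw [← mul_assoc (T (a - 1 - m - l)), ← mul_assoc (T (-l)), ← T_add, ← T_add,
    exponent_left, exponent_right, lower_left, qbinomZ_mul_qbinomZ_add_one_left,
    T_add _ ((m : ℤ) - l - μ)]
  ring

lemma qTrinomialTerm_succ (a : ℤ) (m : ℕ) (l μ : ℤ) :
    qTrinomialTerm a (m + 1) l (μ + 1) =
      T (a - 1 - m - l) * qTrinomialTerm a m (l + 1) μ +
        T (-l) * qTrinomialTerm (a - 1) m l μ + qTrinomialTerm (a - 1) m (l - 1) (μ + 1) := by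
  rw [qTrinomialTerm_succ_left, T_mul_qbinomZ_mul_eq_add_qTrinomialTerm]

theorem St_succ_rec3_general (a : ℤ) (m : ℕ) (l : ℤ) :
    qTrinomial a (m + 1) l =
      T (a - 1 - m - l) * qTrinomial a m (l + 1) + T (-l) * qTrinomial (a - 1) m l +
        qTrinomial (a - 1) m (l - 1) := by
  have finsum_shift (f : ℤ → LaurentPolynomial ℤ) : ∑ᶠ μ, f (μ + 1) = ∑ᶠ ν, f ν :=
    finsum_comp_equiv (Equiv.addRight (1 : ℤ))
  have finite_mul (c : LaurentPolynomial ℤ) (b k : ℤ) :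
      (fun μ => c * qTrinomialTerm b m k μ).HasFiniteSupport :=
    .mul_right _ (hasFiniteSupport_qTrinomialTerm b m k)
  have finite_shift (b k : ℤ) : (fun μ => qTrinomialTerm b m k (μ + 1)).HasFiniteSupport :=
    (hasFiniteSupport_qTrinomialTerm b m k).fun_comp_of_injective (add_left_injective (1 : ℤ))
  calc qTrinomial a (m + 1) l
      = ∑ᶠ μ, qTrinomialTerm a (m + 1) l (μ + 1) := (finsum_shift _).symm
    _ = ∑ᶠ μ, (T (a - 1 - m - l) * qTrinomialTerm a m (l + 1) μ +
          T (-l) * qTrinomialTerm (a - 1) m l μ +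
          qTrinomialTerm (a - 1) m (l - 1) (μ + 1)) :=
        finsum_congr (qTrinomialTerm_succ a m l)
    _ = T (a - 1 - m - l) * qTrinomial a m (l + 1) + T (-l) * qTrinomial (a - 1) m l +
          qTrinomial (a - 1) m (l - 1) := by
        rw [finsum_add_distrib (.fun_add (finite_mul _ _ _) (finite_mul _ _ _))
            (finite_shift _ _),
          finsum_add_distrib (finite_mul _ _ _) (finite_mul _ _ _),
          ← mul_finsum, ← mul_finsum, finsum_shift]
        rfl

/-- St_{m+1,l} = q^{-m-l} St_{m,l+1} + q^{-l} S_{m,l} + S_{m,l-1}. -/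
theorem St_succ_rec3 (m : ℕ) (l : ℤ) :
    Sqt (m + 1) l =
      T (-(m : ℤ) - l) * Sqt m (l + 1) + T (-l) * Sq m l + Sq m (l - 1) := by
  simpa only [Sqt_eq_qTrinomial, Sq_eq_qTrinomial, sub_self, zero_sub] using
    St_succ_rec3_general 1 m l
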